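/- Let k be a finite field with q elements of odd characteristic with q ≡ 1 (mod 3), and let K be a field extension of k of degree 2. Let a ∈ k be nonzero such that 1 − 4a is not a square in k, and let z ∈ K satisfy z² + z + a = 0. Then a is a cube in k (∃ b ∈ k, b³ = a) if and only if z is a cube in K (∃ c ∈ K, c³ = z). -/

import Mathlib

theorem cube_crit_aux (F : Type*) [Field F] [Fintype F] (n : ℕ)
    (hn : Fintype.card F = 3 * n + 1) (x : F) (hx : x ≠ 0) :
    (∃ b : F, b ^ 3 = x) ↔ x ^ n = 1 := by
  have hcard : Fintype.card F - 1 = 3 * n := by omega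
  have hn0 : 0 < n := by
    have := Fintype.one_lt_card (α := F)
    omega
  constructor
  · rintro ⟨b, rfl⟩
    have hb : b ≠ 0 := by
      rintro rfl
      simp at hx
    rw [← pow_mul, ← hcard]
    exact FiniteField.pow_card_sub_one_eq_one b hb
  · intro h
    classical
    obtain ⟨g, hg⟩ := IsCyclic.exists_generator (α := Fˣ)
    have ho : orderOf g = 3 * n := by
      rw [orderOf_eq_card_of_forall_mem_zpowers hg, Nat.card_eq_fintype_card,
        Fintype.card_units, hcard]
    obtain ⟨m, hm⟩ := (mem_powers_iff_mem_zpowers).2 (hg (Units.mk0 x hx))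
    have hm' : g ^ m = Units.mk0 x hx := hm
    have h1 : g ^ (m * n) = 1 := by
      rw [pow_mul, hm']
      ext
      simpa using h
    have h2 := orderOf_dvd_of_pow_eq_one h1
    rw [ho] at h2
    obtain ⟨c, rfl⟩ := Nat.dvd_of_mul_dvd_mul_right hn0 h2
    refine ⟨((g ^ c : Fˣ) : F), ?_⟩
    rw [← Units.val_pow_eq_pow_val, ← pow_mul, mul_comm c 3, hm']
    rfl

theorem fixed_aux (k K : Type*) [Field k] [Fintype k] [Field K] [Algebra k K]
    (z : K) (hz : z ^ Fintype.card k = z) : ∃ y : k, algebraMap k K y = z := by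
  classical
  have hne := FiniteField.X_pow_card_sub_X_ne_zero K (Fintype.one_lt_card (α := k))
  have hdeg := FiniteField.X_pow_card_sub_X_natDegree_eq K (Fintype.one_lt_card (α := k))
  set p : Polynomial K := Polynomial.X ^ Fintype.card k - Polynomial.X with hp
  have hsub : Finset.univ.image (algebraMap k K) ⊆ p.roots.toFinset := by
    intro w hw
    obtain ⟨y, -, rfl⟩ := Finset.mem_image.1 hw
    rw [Multiset.mem_toFinset, Polynomial.mem_roots hne]
    simp [hp, Polynomial.IsRoot, ← map_pow, FiniteField.pow_card]
  have heq := Finset.eq_of_subset_of_card_le hsub (by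
    rw [Finset.card_image_of_injective _ (algebraMap k K).injective, Finset.card_univ, ← hdeg]
    exact (Multiset.toFinset_card_le _).trans (Polynomial.card_roots' p))
  have hzr : z ∈ p.roots.toFinset := by
    rw [Multiset.mem_toFinset, Polynomial.mem_roots hne]
    simp [hp, Polynomial.IsRoot, hz]
  rw [← heq] at hzr
  obtain ⟨y, -, hy⟩ := Finset.mem_image.1 hzr
  exact ⟨y, hy⟩

/-- Let `k` be a finite field with `q` elements of odd characteristic with `q ≡ 1 (mod 3)`,
and let `K` be a field extension of `k` of degree 2. Let `a ∈ k` be nonzero such that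
`1 − 4a` is not a square in `k`, and let `z ∈ K` satisfy `z² + z + a = 0`. Then `a` is a
cube in `k` if and only if `z` is a cube in `K`. -/
theorem cube_iff_root_cube_of_one_sub_four_mul_not_square
    (k K : Type*) [Field k] [Fintype k] [Field K] [Algebra k K]
    (hodd : ringChar k ≠ 2) (hq : Fintype.card k % 3 = 1)
    (hdeg : Module.finrank k K = 2)
    (a : k) (ha : a ≠ 0) (hns : ¬ ∃ b : k, b ^ 2 = 1 - 4 * a)
    (z : K) (hz : z ^ 2 + z + algebraMap k K a = 0) :
    (∃ b : k, b ^ 3 = a) ↔ (∃ c : K, c ^ 3 = z) := by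
  classical
  have : Module.Finite k K := Module.finite_of_finrank_pos (by omega)
  have : Finite K := Module.finite_of_finite k
  have := Fintype.ofFinite K
  have hK : Fintype.card K = Fintype.card k ^ 2 := by
    rw [Module.card_eq_pow_finrank (K := k) (V := K), hdeg]
  obtain ⟨n, hn⟩ : ∃ n, Fintype.card k = 3 * n + 1 := ⟨Fintype.card k / 3, by omega⟩
  have hKn : Fintype.card K = 3 * ((Fintype.card k + 1) * n) + 1 := by
    rw [hK, hn]; ring
  have hz0 : z ≠ 0 := by
    rintro rfl
    apply ha
    simpa using hz
  have hw : (z ^ Fintype.card k) ^ 2 + z ^ Fintype.card k + algebraMap k K a = 0 := by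
    have h := congrArg (FiniteField.frobeniusAlgHom k K) hz
    rw [map_add, map_add, map_pow, AlgHom.commutes, map_zero] at h
    exact h
  have hnorm : z ^ (Fintype.card k + 1) = algebraMap k K a := by
    have h : (z ^ Fintype.card k - z) * (z ^ Fintype.card k + z + 1) = 0 := by
      linear_combination hw - hz
    rcases mul_eq_zero.1 h with h | h
    · exfalso
      obtain ⟨y, rfl⟩ := fixed_aux k K z (sub_eq_zero.1 h)
      have hy : y ^ 2 + y + a = 0 := by
        apply (algebraMap k K).injective
        simpa using hz
      exact hns ⟨2 * y + 1, by linear_combination 4 * hy⟩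
    · rw [pow_succ]
      linear_combination z * h - hz
  rw [cube_crit_aux k n hn a ha, cube_crit_aux K _ hKn z hz0, pow_mul, hnorm, ← map_pow]
  exact (map_eq_one_iff _ (algebraMap k K).injective).symm
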